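/- Suppose a sequence u_k ∈ H_0^1(B) with ‖∇u_k‖_2 = 1 satisfies: for every sequence ζ_k ∈ B, u_k ∘ η_{ζ_k} ⇀ 0 weakly in H_0^1(B). Then for every F ∈ C(ℝ) with |F(s)| ≤ C|s|^r e^{p s²} for some C > 0, r > 2, p < 4π, one has ∫_B F(u_k) dμ → 0. -/

import Mathlib

open MeasureTheory Real Filter Set Metric
open scoped Topology RealInnerProductSpace ENNReal

noncomputable section

/-- The open unit disk in `ℂ`. -/
def unitDisk : Set ℂ := {z : ℂ | ‖z‖ < 1}

/-- The Möbius transformation `η_ζ(z) = (z - ζ)/(1 - conj(ζ)·z)`. -/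
def eta (ζ z : ℂ) : ℂ := (z - ζ) / (1 - (starRingEnd ℂ) ζ * z)

/-!
Let `G(y) = -log |y| / (2π)` be the Green function of the disk. A value `u(x)` is the value at `0`
of the Möbius shift `w = u ∘ η_{-x}`, hence equals `∫ ⟪∇w, ∇G⟫`. Replace `G` by a smooth function
`φ` with `∇φ = ∇G` on `s ≤ |y| < R`. The pairing of `∇w` with `∇φ` tends to `0` uniformly in `x`
by the vanishing hypothesis. The error from `|y| ≥ R` is at most `√(-log R / (2π))` by
Cauchy–Schwarz. The error from `|y| < s` is, by Möbius invariance, a hyperbolic convolution in `x`,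
whose `L²(μ)` norm is at most `-log (1 - s)` by Schur's test. If `τ` bounds the first two
contributions, Chebyshev's inequality gives `μ {|u| > t} ≤ (-log (1 - s) / (t - τ))²`.

With `s` small and `R` close to `1` this yields `μ {|u_k| > t} → 0` for every `t > 0`. With `φ = 0`
and `s = R = exp (-2πκ²t²)`, where `κ < 1`, one has `τ = κt`, and the bound decays like
`exp (-4πκ²t²)` as `t → ∞` and is `O (t⁻² log² t)` as `t → 0`. It is therefore integrable against
the derivative of `t ^ r * exp (p * t²)` when `r > 2` and `p < 4πκ²`, and dominated convergence in
the layer cake formula gives the limit.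
-/

/-! ### Möbius transformations and the hyperbolic measure -/

lemma unitDisk_eq_ball : unitDisk = ball (0 : ℂ) 1 := by
  ext z
  simp [unitDisk]

lemma isOpen_unitDisk : IsOpen unitDisk := unitDisk_eq_ball ▸ isOpen_ball

lemma measurableSet_unitDisk : MeasurableSet unitDisk := isOpen_unitDisk.measurableSet

lemma zero_mem_unitDisk : (0 : ℂ) ∈ unitDisk := by simp [unitDisk]

lemma neg_mem_unitDisk {z : ℂ} (hz : z ∈ unitDisk) : -z ∈ unitDisk := by
  simpa [unitDisk] using hz

lemma one_sub_norm_sq_pos {z : ℂ} (hz : z ∈ unitDisk) : 0 < 1 - ‖z‖ ^ 2 := by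
  have h : ‖z‖ < 1 := hz
  nlinarith [norm_nonneg z]

lemma hasCompactSupport_of_tsupport_subset_unitDisk {u : ℂ → ℝ} (hu : tsupport u ⊆ unitDisk) :
    HasCompactSupport u :=
  isCompact_of_isClosed_isBounded (isClosed_tsupport u)
    (isBounded_ball.subset (unitDisk_eq_ball ▸ hu))

lemma eta_denom_ne_zero {ζ z : ℂ} (hζ : ζ ∈ unitDisk) (hz : z ∈ unitDisk) :
    1 - (starRingEnd ℂ) ζ * z ≠ 0 := by
  intro h
  have hprod : ‖ζ‖ * ‖z‖ = 1 := by
    rw [← RCLike.norm_conj ζ, ← norm_mul, ← sub_eq_zero.mp h, norm_one]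
  exact (mul_lt_one_of_nonneg_of_lt_one_left (norm_nonneg _) hζ (le_of_lt hz)).ne hprod

lemma norm_eta_denom_sq_sub (ζ z : ℂ) :
    ‖1 - (starRingEnd ℂ) ζ * z‖ ^ 2 - ‖z - ζ‖ ^ 2 = (1 - ‖ζ‖ ^ 2) * (1 - ‖z‖ ^ 2) := by
  simp only [← Complex.normSq_eq_norm_sq, Complex.normSq_apply]
  simp
  ring

lemma one_sub_norm_eta_sq {ζ z : ℂ} (hζ : ζ ∈ unitDisk) (hz : z ∈ unitDisk) :
    1 - ‖eta ζ z‖ ^ 2 = (1 - ‖ζ‖ ^ 2) * (1 - ‖z‖ ^ 2) / ‖1 - (starRingEnd ℂ) ζ * z‖ ^ 2 := by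
  have h := norm_ne_zero_iff.mpr (eta_denom_ne_zero hζ hz)
  rw [eta, norm_div, ← norm_eta_denom_sq_sub, div_pow, sub_div, div_self (pow_ne_zero 2 h)]

lemma eta_mem_unitDisk {ζ z : ℂ} (hζ : ζ ∈ unitDisk) (hz : z ∈ unitDisk) :
    eta ζ z ∈ unitDisk := by
  have h : 0 < 1 - ‖eta ζ z‖ ^ 2 := by
    rw [one_sub_norm_eta_sq hζ hz]
    have := norm_pos_iff.mpr (eta_denom_ne_zero hζ hz)
    have := one_sub_norm_sq_pos hζ
    have := one_sub_norm_sq_pos hz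
    positivity
  exact (sq_lt_one_iff₀ (norm_nonneg _)).mp (sub_pos.mp h)

lemma eta_eta_neg {ζ z : ℂ} (hζ : ζ ∈ unitDisk) (hz : z ∈ unitDisk) :
    eta ζ (eta (-ζ) z) = z := by
  have h₁ := eta_denom_ne_zero (neg_mem_unitDisk hζ) hz
  have h₂ := eta_denom_ne_zero hζ hζ
  have hnum : z - -ζ - ζ * (1 - (starRingEnd ℂ) (-ζ) * z)
      = z * (1 - (starRingEnd ℂ) ζ * ζ) := by
    simp only [map_neg]; ring
  have hden : 1 - (starRingEnd ℂ) (-ζ) * z - (starRingEnd ℂ) ζ * (z - -ζ)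
      = 1 - (starRingEnd ℂ) ζ * ζ := by
    simp only [map_neg]; ring
  unfold eta
  rw [div_sub' h₁, mul_div_assoc', one_sub_div h₁, div_div_div_cancel_right₀ h₁, hden,
    mul_comm _ ζ, hnum, mul_div_cancel_right₀ _ h₂]

lemma eta_neg_eta {ζ z : ℂ} (hζ : ζ ∈ unitDisk) (hz : z ∈ unitDisk) :
    eta (-ζ) (eta ζ z) = z := by
  simpa using eta_eta_neg (neg_mem_unitDisk hζ) hz

lemma eta_zero (ζ : ℂ) : eta ζ 0 = -ζ := by simp [eta]

lemma norm_eta_comm (ζ z : ℂ) : ‖eta ζ z‖ = ‖eta z ζ‖ := by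
  have h : 1 - (starRingEnd ℂ) ζ * z = (starRingEnd ℂ) (1 - (starRingEnd ℂ) z * ζ) := by
    simp [mul_comm]
  rw [eta, eta, norm_div, norm_div, norm_sub_rev, h, RCLike.norm_conj]

lemma measurable_eta : Measurable fun p : ℂ × ℂ => eta p.1 p.2 := by
  have h : Measurable fun p : ℂ × ℂ => (starRingEnd ℂ) p.1 :=
    Complex.continuous_conj.measurable.comp measurable_fst
  exact (measurable_snd.sub measurable_fst).div (measurable_const.sub (h.mul measurable_snd))

lemma injOn_eta {ζ : ℂ} (hζ : ζ ∈ unitDisk) : InjOn (eta ζ) unitDisk :=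
  LeftInvOn.injOn fun _ hz => eta_neg_eta hζ hz

lemma image_eta_unitDisk {ζ : ℂ} (hζ : ζ ∈ unitDisk) : eta ζ '' unitDisk = unitDisk :=
  SurjOn.image_eq_of_mapsTo
    (fun z hz => ⟨eta (-ζ) z, eta_mem_unitDisk (neg_mem_unitDisk hζ) hz, eta_eta_neg hζ hz⟩)
    fun _ hz => eta_mem_unitDisk hζ hz

/-- The complex derivative of the Möbius transformation `eta ζ` at `z`, in closed form. -/
def etaDeriv (ζ z : ℂ) : ℂ := (1 - (‖ζ‖ : ℂ) ^ 2) / (1 - (starRingEnd ℂ) ζ * z) ^ 2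

lemma hasDerivAt_eta {ζ z : ℂ} (hζ : ζ ∈ unitDisk) (hz : z ∈ unitDisk) :
    HasDerivAt (eta ζ) (etaDeriv ζ z) z := by
  have hnum : HasDerivAt (fun z : ℂ => z - ζ) 1 z := (hasDerivAt_id z).sub_const ζ
  have hden : HasDerivAt (fun z : ℂ => 1 - (starRingEnd ℂ) ζ * z) (-((starRingEnd ℂ) ζ)) z := by
    simpa using ((hasDerivAt_id z).const_mul ((starRingEnd ℂ) ζ)).const_sub 1
  refine (hnum.div hden (eta_denom_ne_zero hζ hz)).congr_deriv ?_
  rw [etaDeriv, ← Complex.conj_mul']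
  congr 1
  ring

lemma hasFDerivAt_eta {ζ z : ℂ} (hζ : ζ ∈ unitDisk) (hz : z ∈ unitDisk) :
    HasFDerivAt (eta ζ)
      ((ContinuousLinearMap.toSpanSingleton ℂ (etaDeriv ζ z)).restrictScalars ℝ) z :=
  (hasDerivAt_eta hζ hz).hasFDerivAt.restrictScalars ℝ

lemma norm_etaDeriv_mul {ζ z : ℂ} (hζ : ζ ∈ unitDisk) (hz : z ∈ unitDisk) :
    ‖etaDeriv ζ z‖ * (1 - ‖z‖ ^ 2) = 1 - ‖eta ζ z‖ ^ 2 := by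
  have hnum : ‖(1 - (‖ζ‖ : ℂ) ^ 2)‖ = 1 - ‖ζ‖ ^ 2 := by
    rw [← Complex.ofReal_pow, ← Complex.ofReal_one, ← Complex.ofReal_sub, Complex.norm_real,
      Real.norm_of_nonneg (one_sub_norm_sq_pos hζ).le]
  rw [one_sub_norm_eta_sq hζ hz, etaDeriv, norm_div, norm_pow, hnum]
  ring

lemma norm_etaDeriv_pos {ζ z : ℂ} (hζ : ζ ∈ unitDisk) (hz : z ∈ unitDisk) :
    0 < ‖etaDeriv ζ z‖ := by
  have h := one_sub_norm_sq_pos (eta_mem_unitDisk hζ hz)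
  rw [← norm_etaDeriv_mul hζ hz] at h
  exact pos_of_mul_pos_left h (one_sub_norm_sq_pos hz).le

lemma det_restrictScalars_toSpanSingleton (a : ℂ) :
    ((ContinuousLinearMap.toSpanSingleton ℂ a).restrictScalars ℝ).det = ‖a‖ ^ 2 := by
  simp [ContinuousLinearMap.det, LinearMap.det_restrictScalars, Algebra.norm_complex_eq,
    Complex.normSq_eq_norm_sq]

lemma lintegral_unitDisk_comp_eta {ζ : ℂ} (hζ : ζ ∈ unitDisk) (g : ℂ → ℝ≥0∞) :
    ∫⁻ z in unitDisk, ENNReal.ofReal (‖etaDeriv ζ z‖ ^ 2) * g (eta ζ z)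
      = ∫⁻ z in unitDisk, g z := by
  have h := lintegral_image_eq_lintegral_abs_det_fderiv_mul volume measurableSet_unitDisk
    (fun _ hz => (hasFDerivAt_eta hζ hz).hasFDerivWithinAt) (injOn_eta hζ) g
  simpa only [image_eta_unitDisk hζ, det_restrictScalars_toSpanSingleton, abs_sq] using h.symm

/-- The hyperbolic measure `dμ = dx / (1 - |x|²)²`, as a measure on `ℂ` carried by the disk. -/
def hypMeasure : Measure ℂ :=
  (volume.restrict unitDisk).withDensity fun z => ENNReal.ofReal ((1 - ‖z‖ ^ 2) ^ 2)⁻¹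

instance : SFinite hypMeasure := by unfold hypMeasure; infer_instance

lemma lintegral_hypMeasure (g : ℂ → ℝ≥0∞) :
    ∫⁻ z, g z ∂hypMeasure
      = ∫⁻ z in unitDisk, ENNReal.ofReal ((1 - ‖z‖ ^ 2) ^ 2)⁻¹ * g z :=
  lintegral_withDensity_eq_lintegral_mul_non_measurable _ (by fun_prop)
    (ae_of_all _ fun _ => ENNReal.ofReal_lt_top) _

lemma ae_mem_unitDisk : ∀ᵐ z ∂hypMeasure, z ∈ unitDisk :=
  (withDensity_absolutelyContinuous _ _).ae_le (ae_restrict_mem measurableSet_unitDisk)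

lemma lintegral_hypMeasure_comp_eta {ζ : ℂ} (hζ : ζ ∈ unitDisk) (g : ℂ → ℝ≥0∞) :
    ∫⁻ z, g (eta ζ z) ∂hypMeasure = ∫⁻ z, g z ∂hypMeasure := by
  rw [lintegral_hypMeasure, lintegral_hypMeasure, ← lintegral_unitDisk_comp_eta hζ
    fun z => ENNReal.ofReal ((1 - ‖z‖ ^ 2) ^ 2)⁻¹ * g z]
  refine setLIntegral_congr_fun measurableSet_unitDisk fun z hz => ?_
  rw [← mul_assoc, ← ENNReal.ofReal_mul (by positivity), ← norm_etaDeriv_mul hζ hz]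
  congr 2
  have := (norm_etaDeriv_pos hζ hz).ne'
  have := (one_sub_norm_sq_pos hz).ne'
  field_simp

lemma continuous_gradient {u : ℂ → ℝ} (hu : ContDiff ℝ 1 u) : Continuous (gradient u) :=
  (LinearIsometryEquiv.continuous _).comp (hu.continuous_fderiv one_ne_zero)

lemma hasGradientAt_comp_eta {u : ℂ → ℝ} {ζ z : ℂ} (hζ : ζ ∈ unitDisk) (hz : z ∈ unitDisk)
    (hu : DifferentiableAt ℝ u (eta ζ z)) :
    HasGradientAt (fun y => u (eta ζ y))
      ((starRingEnd ℂ) (etaDeriv ζ z) * gradient u (eta ζ z)) z := by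
  rw [hasGradientAt_iff_hasFDerivAt]
  refine (hu.hasFDerivAt.comp z (hasFDerivAt_eta hζ hz)).congr_fderiv
    (ContinuousLinearMap.ext fun w => Eq.symm ?_)
  change inner ℝ ((starRingEnd ℂ) (etaDeriv ζ z) * gradient u (eta ζ z)) w
    = fderiv ℝ u (eta ζ z) (w * etaDeriv ζ z)
  rw [← inner_gradient_left, Complex.inner, Complex.inner, map_mul, Complex.conj_conj]
  congr 1
  ring

/-- The norm `(1 - |z|²)|∇u(z)|` of the gradient of `u` in the hyperbolic metric; unlike `|∇u|` it
is a Möbius-invariant expression. -/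
def hypGradNorm (u : ℂ → ℝ) (z : ℂ) : ℝ≥0∞ := ENNReal.ofReal (1 - ‖z‖ ^ 2) * ‖gradient u z‖ₑ

lemma measurable_hypGradNorm {u : ℂ → ℝ} (hu : ContDiff ℝ 1 u) : Measurable (hypGradNorm u) := by
  have := (continuous_gradient hu).measurable
  unfold hypGradNorm
  fun_prop

lemma hypGradNorm_comp_eta {u : ℂ → ℝ} {ζ z : ℂ} (hζ : ζ ∈ unitDisk) (hz : z ∈ unitDisk)
    (hu : DifferentiableAt ℝ u (eta ζ z)) :
    hypGradNorm (fun y => u (eta ζ y)) z = hypGradNorm u (eta ζ z) := by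
  simp only [hypGradNorm, (hasGradientAt_comp_eta hζ hz hu).gradient, ← ofReal_norm, norm_mul,
    RCLike.norm_conj, ← norm_etaDeriv_mul hζ hz, ENNReal.ofReal_mul (norm_nonneg (etaDeriv _ _))]
  ring

/-- The square of the norm of `u` in `H₀¹(B)`. -/
def dirichletEnergy (u : ℂ → ℝ) : ℝ≥0∞ := ∫⁻ z in unitDisk, ‖gradient u z‖ₑ ^ 2

lemma lintegral_hypGradNorm_sq (u : ℂ → ℝ) :
    ∫⁻ z, hypGradNorm u z ^ 2 ∂hypMeasure = dirichletEnergy u := by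
  rw [lintegral_hypMeasure]
  refine setLIntegral_congr_fun measurableSet_unitDisk fun z hz => ?_
  have h := one_sub_norm_sq_pos hz
  rw [hypGradNorm, mul_pow, ← mul_assoc, ← ENNReal.ofReal_pow h.le, ← ENNReal.ofReal_mul
    (by positivity), inv_mul_cancel₀ (by positivity), ENNReal.ofReal_one, one_mul]

lemma dirichletEnergy_comp_eta {u : ℂ → ℝ} (hu : Differentiable ℝ u) {ζ : ℂ}
    (hζ : ζ ∈ unitDisk) : dirichletEnergy (fun y => u (eta ζ y)) = dirichletEnergy u := by
  rw [← lintegral_hypGradNorm_sq, ← lintegral_hypGradNorm_sq,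
    ← lintegral_hypMeasure_comp_eta hζ fun z => hypGradNorm u z ^ 2]
  refine lintegral_congr_ae ?_
  filter_upwards [ae_mem_unitDisk] with z hz
  rw [hypGradNorm_comp_eta hζ hz (hu _)]

/-- The Möbius shift `u ∘ η_ζ` of a function on the disk, extended by zero to `ℂ`: the formula for
`eta ζ` has a pole outside the disk. -/
def etaPullback (ζ : ℂ) (u : ℂ → ℝ) : ℂ → ℝ := unitDisk.indicator fun z => u (eta ζ z)

lemma eventuallyEq_etaPullback (ζ : ℂ) (u : ℂ → ℝ) {z : ℂ} (hz : z ∈ unitDisk) :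
    etaPullback ζ u =ᶠ[𝓝 z] fun y => u (eta ζ y) := by
  filter_upwards [isOpen_unitDisk.mem_nhds hz] with y hy using indicator_of_mem hy _

lemma gradient_etaPullback (ζ : ℂ) (u : ℂ → ℝ) {z : ℂ} (hz : z ∈ unitDisk) :
    gradient (etaPullback ζ u) z = gradient (fun y => u (eta ζ y)) z :=
  (eventuallyEq_etaPullback ζ u hz).gradient_eq

lemma etaPullback_neg_zero (x : ℂ) (u : ℂ → ℝ) : etaPullback (-x) u 0 = u x := by
  rw [etaPullback, indicator_of_mem zero_mem_unitDisk, eta_zero, neg_neg]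

lemma contDiff_of_forall_mem_tsupport {𝕜 E F : Type*} [NontriviallyNormedField 𝕜]
    [NormedAddCommGroup E] [NormedSpace 𝕜 E] [NormedAddCommGroup F] [NormedSpace 𝕜 F] {f : E → F}
    {n : WithTop ℕ∞} (hf : ∀ x ∈ tsupport f, ContDiffAt 𝕜 n f x) : ContDiff 𝕜 n f :=
  (contMDiff_of_tsupport fun x hx => (hf x hx).contMDiffAt).contDiff

lemma tsupport_etaPullback_subset {u : ℂ → ℝ} (hu : tsupport u ⊆ unitDisk) {ζ : ℂ}
    (hζ : ζ ∈ unitDisk) : tsupport (etaPullback ζ u) ⊆ unitDisk := by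
  have hζ' := neg_mem_unitDisk hζ
  have hcompact : IsCompact (eta (-ζ) '' tsupport u) :=
    (hasCompactSupport_of_tsupport_subset_unitDisk hu).isCompact.image_of_continuousOn
      fun z hz => (hasDerivAt_eta hζ' (hu hz)).continuousAt.continuousWithinAt
  have hsupport : Function.support (etaPullback ζ u) ⊆ eta (-ζ) '' tsupport u := by
    intro z hz
    have hzB : z ∈ unitDisk := mem_of_indicator_ne_zero hz
    rw [Function.mem_support, etaPullback, indicator_of_mem hzB] at hz
    exact ⟨eta ζ z, subset_tsupport u hz, eta_neg_eta hζ hzB⟩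
  refine (closure_minimal hsupport hcompact.isClosed).trans ?_
  rintro _ ⟨z, hz, rfl⟩
  exact eta_mem_unitDisk hζ' (hu hz)

lemma contDiff_etaPullback {u : ℂ → ℝ} {n : WithTop ℕ∞} (hu : ContDiff ℝ n u)
    (hs : tsupport u ⊆ unitDisk) {ζ : ℂ} (hζ : ζ ∈ unitDisk) : ContDiff ℝ n (etaPullback ζ u) := by
  refine contDiff_of_forall_mem_tsupport fun z hz => ?_
  have hzB := tsupport_etaPullback_subset hs hζ hz
  have heta : ContDiffAt ℝ n (eta ζ) z := by
    have hnum : ContDiffAt ℝ n (fun z : ℂ => z - ζ) z := by fun_prop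
    have hden : ContDiffAt ℝ n (fun z : ℂ => 1 - (starRingEnd ℂ) ζ * z) z := by fun_prop
    exact hnum.mul (hden.inv (eta_denom_ne_zero hζ hzB))
  exact (hu.contDiffAt.comp z heta).congr_of_eventuallyEq (eventuallyEq_etaPullback ζ u hzB)

/-! ### The Green function -/

lemma setLIntegral_comp_norm {g : ℝ → ℝ≥0∞} (hg : Measurable g) {s : Set ℝ}
    (hs : MeasurableSet s) :
    ∫⁻ z in (‖·‖) ⁻¹' s, g ‖(z : ℂ)‖ = ∫⁻ r in Ioi 0 ∩ s, ENNReal.ofReal (2 * π * r) * g r := by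
  have hpolar : ∀ p ∈ polarCoord.target,
      ENNReal.ofReal p.1 • s.indicator g ‖Complex.polarCoord.symm p‖
        = ENNReal.ofReal p.1 * s.indicator g p.1 := fun p hp => by
    rw [Complex.norm_polarCoord_symm, abs_of_pos (mem_Ioi.mp hp.1), smul_eq_mul]
  calc ∫⁻ z in (‖·‖) ⁻¹' s, g ‖(z : ℂ)‖
      = ∫⁻ z : ℂ, s.indicator g ‖z‖ := (lintegral_indicator (measurable_norm hs) _).symm
    _ = ∫⁻ r in Ioi 0, ENNReal.ofReal r * s.indicator g r * ENNReal.ofReal (2 * π) := by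
        rw [← Complex.lintegral_comp_polarCoord_symm,
          setLIntegral_congr_fun polarCoord.open_target.measurableSet hpolar, polarCoord_target,
          Measure.volume_eq_prod, ← Measure.prod_restrict,
          lintegral_prod _ (by fun_prop (disch := exact hs))]
        simp only [setLIntegral_const, Real.volume_Ioo, sub_neg_eq_add, ← two_mul]
    _ = ∫⁻ r in Ioi 0, s.indicator (fun r => ENNReal.ofReal (2 * π * r) * g r) r := by
        refine lintegral_congr fun r => ?_
        by_cases hr : r ∈ s
        · rw [indicator_of_mem hr, indicator_of_mem hr, ENNReal.ofReal_mul two_pi_pos.le]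
          ring
        · simp [hr]
    _ = ∫⁻ r in Ioi 0 ∩ s, ENNReal.ofReal (2 * π * r) * g r := by
        rw [lintegral_indicator hs, Measure.restrict_restrict hs, inter_comm]

lemma setLIntegral_Ioo_inv {a b : ℝ} (ha : 0 < a) (hab : a ≤ b) :
    ∫⁻ r in Ioo a b, ENNReal.ofReal r⁻¹ = ENNReal.ofReal (log (b / a)) := by
  have hcont : ContinuousOn (fun r : ℝ => r⁻¹) (Icc a b) :=
    continuousOn_inv₀.mono fun r hr => (ha.trans_le hr.1).ne'
  rw [← integral_inv_of_pos ha (ha.trans_le hab), intervalIntegral.integral_of_le hab,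
    integral_Ioc_eq_integral_Ioo, ofReal_integral_eq_lintegral_ofReal
      (hcont.integrableOn_Icc.mono_set Ioo_subset_Icc_self)]
  filter_upwards [ae_restrict_mem measurableSet_Ioo] with r hr using inv_nonneg.mpr
    (ha.trans hr.1).le

lemma setLIntegral_Ioo_inv_one_sub {s : ℝ} (hs : 0 ≤ s) (hs1 : s < 1) :
    ∫⁻ r in Ioo 0 s, ENNReal.ofReal (1 - r)⁻¹ = ENNReal.ofReal (-log (1 - s)) := by
  have h := (Measure.measurePreserving_sub_left volume (1 : ℝ)).setLIntegral_comp_preimage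
    (s := Ioo (1 - s) 1) measurableSet_Ioo (f := fun r => ENNReal.ofReal r⁻¹) (by fun_prop)
  rw [preimage_const_sub_Ioo, sub_self, sub_sub_cancel] at h
  rw [h, setLIntegral_Ioo_inv (by linarith) (by linarith), one_div, log_inv]

/-- The gradient of the Green function `-log |y| / (2π)` of the disk with pole at `0`; its value at
the pole is `0`. -/
def greenGradient (y : ℂ) : ℂ := -((2 * π * ‖y‖ ^ 2)⁻¹ : ℝ) • y

lemma norm_greenGradient (y : ℂ) : ‖greenGradient y‖ = (2 * π * ‖y‖)⁻¹ := by
  rcases eq_or_ne y 0 with rfl | hy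
  · simp [greenGradient]
  have : ‖y‖ ≠ 0 := norm_ne_zero_iff.mpr hy
  rw [greenGradient, neg_smul, norm_neg, norm_smul, Real.norm_of_nonneg (by positivity)]
  field_simp

lemma enorm_greenGradient (y : ℂ) : ‖greenGradient y‖ₑ = ENNReal.ofReal (2 * π * ‖y‖)⁻¹ := by
  rw [← ofReal_norm, norm_greenGradient]

lemma measurable_greenGradient : Measurable greenGradient := by
  unfold greenGradient
  fun_prop

lemma locallyIntegrable_greenGradient : LocallyIntegrable greenGradient := by
  refine locallyIntegrable_of_norm_le_rpow (C := (2 * π)⁻¹) (α := 1) (by simp) (by simp)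
    (ae_of_all _ fun y => ?_) measurable_greenGradient.aestronglyMeasurable
  rw [norm_greenGradient, mul_inv, rpow_neg_one]

lemma lintegral_annulus_greenGradient_sq {R : ℝ} (hR : 0 < R) (hR1 : R ≤ 1) :
    ∫⁻ y in (‖·‖) ⁻¹' Ico R 1, ‖greenGradient y‖ₑ ^ 2 = ENNReal.ofReal (-log R / (2 * π)) := by
  calc ∫⁻ y in (‖·‖) ⁻¹' Ico R 1, ‖greenGradient y‖ₑ ^ 2
      = ∫⁻ r in Ico R 1, ENNReal.ofReal (2 * π * r) * ENNReal.ofReal (2 * π * r)⁻¹ ^ 2 := by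
        simp only [enorm_greenGradient]
        rw [setLIntegral_comp_norm (g := fun r => ENNReal.ofReal (2 * π * r)⁻¹ ^ 2)
          (by fun_prop) measurableSet_Ico,
          inter_eq_self_of_subset_right (Ico_subset_Ici_self.trans (Ici_subset_Ioi.mpr hR))]
    _ = ∫⁻ r in Ico R 1, ENNReal.ofReal (2 * π)⁻¹ * ENNReal.ofReal r⁻¹ := by
        refine setLIntegral_congr_fun measurableSet_Ico fun r hr => ?_
        have hr0 : 0 < r := hR.trans_le hr.1
        rw [← ENNReal.ofReal_pow (by positivity), ← ENNReal.ofReal_mul (by positivity),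
          ← ENNReal.ofReal_mul (by positivity)]
        congr 1
        field_simp
    _ = ENNReal.ofReal (-log R / (2 * π)) := by
        rw [lintegral_const_mul _ (by fun_prop), ← setLIntegral_congr Ioo_ae_eq_Ico,
          setLIntegral_Ioo_inv hR hR1, ← ENNReal.ofReal_mul (by positivity), one_div, log_inv,
          inv_mul_eq_div]

/-- The hyperbolic size `(1 - |y|²)|∇G(y)|` of the gradient of the Green function `G`, restricted
to the ball of radius `s` about the pole. -/
def greenKernel (s : ℝ) : ℂ → ℝ≥0∞ :=
  (ball 0 s).indicator fun y => ENNReal.ofReal (1 - ‖y‖ ^ 2) * ‖greenGradient y‖ₑ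

lemma measurable_greenKernel (s : ℝ) : Measurable (greenKernel s) := by
  have := measurable_greenGradient
  exact Measurable.indicator (by fun_prop) measurableSet_ball

lemma greenKernel_eq_of_norm_eq {s : ℝ} {y z : ℂ} (h : ‖y‖ = ‖z‖) :
    greenKernel s y = greenKernel s z := by
  classical
  simp only [greenKernel, indicator_apply, mem_ball_zero_iff, enorm_greenGradient, h]

lemma lintegral_greenKernel_le {s : ℝ} (hs : 0 ≤ s) (hs1 : s < 1) :
    ∫⁻ y, greenKernel s y ∂hypMeasure ≤ ENNReal.ofReal (-log (1 - s)) := by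
  have hone : ∀ {r : ℝ}, 0 ≤ r → r < s → 0 < 1 - r ^ 2 := fun h₀ h => by nlinarith
  calc ∫⁻ y, greenKernel s y ∂hypMeasure
      ≤ ∫⁻ y : ℂ, (ball 0 s).indicator
          (fun y => ENNReal.ofReal ((1 - ‖y‖ ^ 2)⁻¹ * (2 * π * ‖y‖)⁻¹)) y := by
        rw [lintegral_hypMeasure]
        refine (setLIntegral_le_lintegral _ _).trans (lintegral_mono fun y => ?_)
        by_cases hy : y ∈ ball 0 s
        · have := hone (norm_nonneg y) (by simpa using hy)
          rw [greenKernel, indicator_of_mem hy, indicator_of_mem hy, enorm_greenGradient,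
            ← ENNReal.ofReal_mul this.le, ← ENNReal.ofReal_mul (by positivity)]
          refine ENNReal.ofReal_le_ofReal (le_of_eq ?_)
          field_simp
        · simp [greenKernel, hy]
    _ = ∫⁻ r in Ioo 0 s,
          ENNReal.ofReal (2 * π * r) * ENNReal.ofReal ((1 - r ^ 2)⁻¹ * (2 * π * r)⁻¹) := by
        have hball : ball (0 : ℂ) s = (‖·‖) ⁻¹' Iio s := by ext; simp
        rw [lintegral_indicator measurableSet_ball, hball, ← Ioi_inter_Iio, setLIntegral_comp_norm
          (g := fun r => ENNReal.ofReal ((1 - r ^ 2)⁻¹ * (2 * π * r)⁻¹)) (by fun_prop)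
          measurableSet_Iio]
    _ ≤ ∫⁻ r in Ioo 0 s, ENNReal.ofReal (1 - r)⁻¹ := by
        refine setLIntegral_mono' measurableSet_Ioo fun r hr => ?_
        have hr0 : 0 < r := hr.1
        have := hone hr0.le hr.2
        rw [← ENNReal.ofReal_mul (by positivity), mul_left_comm, mul_inv_cancel₀ (by positivity),
          mul_one]
        exact ENNReal.ofReal_le_ofReal (inv_anti₀ (by linarith [hr.2]) (by nlinarith [hr.2]))
    _ = ENNReal.ofReal (-log (1 - s)) := setLIntegral_Ioo_inv_one_sub hs hs1

/-! ### The Schur test -/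

lemma lintegral_mul_sq_le {α : Type*} [MeasurableSpace α] {μ : Measure α} {f g : α → ℝ≥0∞}
    (hf : AEMeasurable f μ) (hg : AEMeasurable g μ) :
    (∫⁻ a, f a * g a ∂μ) ^ 2 ≤ (∫⁻ a, f a ^ 2 ∂μ) * ∫⁻ a, g a ^ 2 ∂μ := by
  have h := ENNReal.lintegral_mul_le_Lp_mul_Lq μ Real.HolderConjugate.two_two hf hg
  simp only [ENNReal.rpow_two, Pi.mul_apply] at h
  refine (pow_le_pow_left' h 2).trans_eq ?_
  rw [mul_pow, ← ENNReal.rpow_mul_natCast, ← ENNReal.rpow_mul_natCast]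
  norm_num

lemma lintegral_mul_weight_sq_le {α : Type*} [MeasurableSpace α] {μ : Measure α}
    {e w : α → ℝ≥0∞} (he : Measurable e) (hw : Measurable w) :
    (∫⁻ a, e a * w a ∂μ) ^ 2 ≤ (∫⁻ a, w a ∂μ) * ∫⁻ a, e a ^ 2 * w a ∂μ := by
  have h := lintegral_mul_sq_le (μ := μ.withDensity w) he.aemeasurable
    (aemeasurable_const (b := 1))
  simp only [mul_one, one_pow, lintegral_one] at h
  rw [lintegral_withDensity_eq_lintegral_mul _ hw he,
    lintegral_withDensity_eq_lintegral_mul _ hw (he.pow_const 2),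
    withDensity_apply _ MeasurableSet.univ, Measure.restrict_univ] at h
  simpa only [Pi.mul_apply, mul_comm] using h

lemma lintegral_sq_lintegral_mul_kernel_le {α β : Type*} [MeasurableSpace α] [MeasurableSpace β]
    {μ : Measure α} {ν : Measure β} [SFinite μ] [SFinite ν] {e : β → ℝ≥0∞} (he : Measurable e)
    {K : α → β → ℝ≥0∞} (hK : Measurable (Function.uncurry K)) {L₁ L₂ : ℝ≥0∞}
    (h₁ : ∀ᵐ x ∂μ, ∫⁻ z, K x z ∂ν ≤ L₁) (h₂ : ∀ᵐ z ∂ν, ∫⁻ x, K x z ∂μ ≤ L₂) :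
    ∫⁻ x, (∫⁻ z, e z * K x z ∂ν) ^ 2 ∂μ ≤ L₁ * L₂ * ∫⁻ z, e z ^ 2 ∂ν := by
  have heK : Measurable fun p : α × β => e p.2 ^ 2 * K p.1 p.2 :=
    ((he.comp measurable_snd).pow_const 2).mul hK
  have hKz : ∀ z, Measurable fun x => K x z := fun z => hK.comp measurable_prodMk_right
  calc ∫⁻ x, (∫⁻ z, e z * K x z ∂ν) ^ 2 ∂μ
      ≤ ∫⁻ x, L₁ * ∫⁻ z, e z ^ 2 * K x z ∂ν ∂μ := by
        refine lintegral_mono_ae ?_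
        filter_upwards [h₁] with x hx
        exact (lintegral_mul_weight_sq_le he (hK.comp measurable_prodMk_left)).trans
          (mul_le_mul_left hx _)
    _ = L₁ * ∫⁻ z, e z ^ 2 * ∫⁻ x, K x z ∂μ ∂ν := by
        rw [lintegral_const_mul _ heK.lintegral_prod_right', lintegral_lintegral_swap
          heK.aemeasurable]
        congr 1
        dsimp only
        exact lintegral_congr fun z => lintegral_const_mul _ (hKz z)
    _ ≤ L₁ * ∫⁻ z, e z ^ 2 * L₂ ∂ν := by
        gcongr L₁ * ?_
        refine lintegral_mono_ae ?_
        filter_upwards [h₂] with z hz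
        gcongr
    _ = L₁ * L₂ * ∫⁻ z, e z ^ 2 ∂ν := by
        rw [lintegral_mul_const _ (he.pow_const 2)]
        ring

/-! ### The Green representation formula -/

lemma integral_Ioi_fderiv_smul {E F : Type*} [NormedAddCommGroup E] [NormedSpace ℝ E]
    [NormedAddCommGroup F] [NormedSpace ℝ F] [CompleteSpace F] {w : E → F}
    (hw : ContDiff ℝ 1 w) (hs : HasCompactSupport w) {e : E} (he : e ≠ 0) :
    ∫ r in Ioi (0 : ℝ), fderiv ℝ w (r • e) e = -w 0 := by
  have hderiv : ∀ r : ℝ, deriv (fun r : ℝ => w (r • e)) r = fderiv ℝ w (r • e) e := fun r => by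
    have hray : HasDerivAt (fun r : ℝ => r • e) e r := by
      simpa using (hasDerivAt_id r).smul_const e
    exact ((hw.differentiable one_ne_zero _).hasFDerivAt.comp_hasDerivAt r hray).deriv
  have h := HasCompactSupport.integral_Ioi_deriv_eq (f := fun r : ℝ => w (r • e))
    (hw.comp (by fun_prop)) (hs.comp_isClosedEmbedding (isClosedEmbedding_smul_left he)) 0
  simpa only [hderiv, zero_smul] using h

lemma integrableOn_fderiv_exp_mul_I {w : ℂ → ℝ} (hw : ContDiff ℝ 1 w) (hs : HasCompactSupport w) :
    IntegrableOn
      (fun p : ℝ × ℝ =>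
        fderiv ℝ w (p.1 • Complex.exp (p.2 * Complex.I)) (Complex.exp (p.2 * Complex.I)))
      (Ioi 0 ×ˢ Ioo (-π) π) := by
  have hcont : Continuous fun p : ℝ × ℝ =>
      fderiv ℝ w (p.1 • Complex.exp (p.2 * Complex.I)) (Complex.exp (p.2 * Complex.I)) :=
    ((hw.continuous_fderiv one_ne_zero).comp (by fun_prop)).clm_apply (by fun_prop)
  obtain ⟨M, hM⟩ := (hs.fderiv ℝ).isCompact.isBounded.subset_closedBall 0
  have hbox : IntegrableOn (fun p : ℝ × ℝ =>
      fderiv ℝ w (p.1 • Complex.exp (p.2 * Complex.I)) (Complex.exp (p.2 * Complex.I)))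
      (Ioc 0 M ×ˢ Ioo (-π) π) :=
    (hcont.continuousOn.integrableOn_compact (isCompact_Icc.prod isCompact_Icc)).mono_set
      (prod_mono Ioc_subset_Icc_self Ioo_subset_Icc_self)
  refine hbox.of_forall_sdiff_eq_zero (measurableSet_Ioi.prod measurableSet_Ioo) ?_
  rintro ⟨r, θ⟩ ⟨⟨hr, hθ⟩, hout⟩
  have hr0 : 0 < r := hr
  have hnotMem : r • Complex.exp (θ * Complex.I) ∉ tsupport (fderiv ℝ w) := fun hmem =>
    hout ⟨⟨hr, by simpa [norm_smul, abs_of_pos hr0] using hM hmem⟩, hθ⟩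
  rw [image_eq_zero_of_notMem_tsupport hnotMem, zero_apply]

lemma inner_gradient_greenGradient_smul (w : ℂ → ℝ) {e : ℂ} (he : ‖e‖ = 1) {r : ℝ}
    (hr : 0 < r) :
    r * ⟪gradient w (r • e), greenGradient (r • e)⟫ = -(2 * π)⁻¹ * fderiv ℝ w (r • e) e := by
  rw [greenGradient, norm_smul, he, mul_one, Real.norm_of_nonneg hr.le, real_inner_smul_right,
    real_inner_smul_right, inner_gradient_left]
  field_simp

lemma integral_inner_gradient_greenGradient {w : ℂ → ℝ} (hw : ContDiff ℝ 1 w)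
    (hs : HasCompactSupport w) : ∫ y, ⟪gradient w y, greenGradient y⟫ = w 0 := by
  have hpolar : ∀ p ∈ polarCoord.target,
      p.1 • ⟪gradient w (Complex.polarCoord.symm p), greenGradient (Complex.polarCoord.symm p)⟫
        = -(2 * π)⁻¹ *
          fderiv ℝ w (p.1 • Complex.exp (p.2 * Complex.I)) (Complex.exp (p.2 * Complex.I)) := by
    intro p hp
    rw [← inner_gradient_greenGradient_smul w (Complex.norm_exp_ofReal_mul_I _) hp.1,
      Complex.polarCoord_symm_apply, Complex.exp_mul_I,
      Complex.real_smul, smul_eq_mul, Complex.ofReal_cos, Complex.ofReal_sin]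
  rw [← Complex.integral_comp_polarCoord_symm,
    setIntegral_congr_fun polarCoord.open_target.measurableSet hpolar, integral_const_mul,
    polarCoord_target, Measure.volume_eq_prod, ← Measure.prod_restrict, integral_prod_symm]
  · simp only [integral_Ioi_fderiv_smul hw hs (Complex.exp_ne_zero _), setIntegral_const,
      Measure.real, Real.volume_Ioo, smul_eq_mul]
    rw [ENNReal.toReal_ofReal (by linarith [pi_pos])]
    field_simp
    ring
  · rw [Measure.prod_restrict]
    exact integrableOn_fderiv_exp_mul_I hw hs

lemma gradient_eq_zero_of_notMem_tsupport {w : ℂ → ℝ} {y : ℂ} (hy : y ∉ tsupport w) :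
    gradient w y = 0 := by
  rw [(notMem_tsupport_iff_eventuallyEq.mp hy).gradient_eq]
  exact gradient_fun_const _ _

lemma setIntegral_inner_gradient_greenGradient {w : ℂ → ℝ} (hw : ContDiff ℝ 1 w)
    (hs : tsupport w ⊆ unitDisk) :
    ∫ y in unitDisk, ⟪gradient w y, greenGradient y⟫ = w 0 := by
  rw [← integral_inner_gradient_greenGradient hw (hasCompactSupport_of_tsupport_subset_unitDisk hs)]
  refine setIntegral_eq_integral_of_forall_compl_eq_zero fun y hy => ?_
  rw [gradient_eq_zero_of_notMem_tsupport fun h => hy (hs h), inner_zero_left]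

lemma integrableOn_inner_gradient_greenGradient {w : ℂ → ℝ} (hw : ContDiff ℝ 1 w) :
    IntegrableOn (fun y => ⟪gradient w y, greenGradient y⟫) unitDisk := by
  have hK : IsCompact (closedBall (0 : ℂ) 1) := isCompact_closedBall 0 1
  obtain ⟨M, hM⟩ := hK.exists_bound_of_continuousOn (continuous_gradient hw).continuousOn
  have hsub : unitDisk ⊆ closedBall 0 1 := unitDisk_eq_ball ▸ ball_subset_closedBall
  refine (((locallyIntegrable_greenGradient.integrableOn_isCompact hK).mono_set hsub).norm.const_mul
    M).mono' ((continuous_gradient hw).measurable.inner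
      measurable_greenGradient).aestronglyMeasurable ?_
  filter_upwards [ae_restrict_mem measurableSet_unitDisk] with y hy
  exact (norm_inner_le_norm _ _).trans (mul_le_mul_of_nonneg_right (hM y (hsub hy)) (norm_nonneg _))

/-! ### Truncated Green functions -/

/-- A test function `φ` whose gradient agrees with that of the Green function on the annulus
`s ≤ |y| < R` and approximates it no worse than `0` does elsewhere. The choice `φ = 0` is allowed
when `R ≤ s`. -/
structure IsTruncatedGreen (φ : ℂ → ℝ) (s R : ℝ) : Prop where
  contDiff : ContDiff ℝ (⊤ : ℕ∞) φ
  tsupport_subset : tsupport φ ⊆ unitDisk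
  norm_sub_le : ∀ y, ‖greenGradient y - gradient φ y‖ ≤ ‖greenGradient y‖
  gradient_eq : ∀ y, s ≤ ‖y‖ → ‖y‖ < R → gradient φ y = greenGradient y

lemma isTruncatedGreen_zero {s R : ℝ} (h : R ≤ s) : IsTruncatedGreen (fun _ => 0) s R where
  contDiff := contDiff_const
  tsupport_subset := by simp [tsupport]
  norm_sub_le y := by rw [gradient_fun_const, sub_zero]
  gradient_eq _ hs hR := absurd (h.trans hs) hR.not_ge

lemma IsTruncatedGreen.enorm_inner_sub_le {φ : ℂ → ℝ} {s R : ℝ} (hφ : IsTruncatedGreen φ s R)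
    (v : ℂ) {y : ℂ} (hy : y ∈ unitDisk) :
    ‖⟪v, greenGradient y - gradient φ y⟫‖ₑ ≤
      (ball 0 s).indicator (fun y => ‖v‖ₑ * ‖greenGradient y‖ₑ) y +
        ((‖·‖) ⁻¹' Ico R 1).indicator (fun y => ‖v‖ₑ * ‖greenGradient y‖ₑ) y := by
  have hbound : ‖⟪v, greenGradient y - gradient φ y⟫‖ₑ ≤ ‖v‖ₑ * ‖greenGradient y‖ₑ := by
    simp only [← ofReal_norm, ← ENNReal.ofReal_mul (norm_nonneg v)]
    exact ENNReal.ofReal_le_ofReal ((norm_inner_le_norm _ _).trans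
      (mul_le_mul_of_nonneg_left (hφ.norm_sub_le y) (norm_nonneg v)))
  by_cases hnear : y ∈ ball 0 s
  · rw [indicator_of_mem hnear]
    exact hbound.trans le_self_add
  by_cases hR : ‖y‖ < R
  · rw [hφ.gradient_eq y (by simpa using hnear) hR, sub_self, inner_zero_right, enorm_zero]
    exact zero_le
  · rw [indicator_of_mem (show y ∈ (‖·‖) ⁻¹' Ico R 1 from ⟨not_lt.mp hR, hy⟩)]
    exact hbound.trans le_add_self

lemma lintegral_hypGradNorm_mul_greenKernel (w : ℂ → ℝ) (s : ℝ) :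
    ∫⁻ y, hypGradNorm w y * greenKernel s y ∂hypMeasure =
      ∫⁻ y in unitDisk, (ball 0 s).indicator (fun y => ‖gradient w y‖ₑ * ‖greenGradient y‖ₑ) y := by
  rw [lintegral_hypMeasure]
  refine setLIntegral_congr_fun measurableSet_unitDisk fun y hy => ?_
  have h := one_sub_norm_sq_pos hy
  by_cases hs : y ∈ ball 0 s
  · rw [greenKernel, indicator_of_mem hs, indicator_of_mem hs, hypGradNorm, mul_mul_mul_comm,
      ← mul_assoc, ← ENNReal.ofReal_mul h.le, ← ENNReal.ofReal_mul (by positivity), ← sq,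
      inv_mul_cancel₀ (by positivity), ENNReal.ofReal_one, one_mul]
  · simp [greenKernel, hs]

lemma setLIntegral_annulus_gradient_mul_greenGradient_le {w : ℂ → ℝ} (hw : ContDiff ℝ 1 w) {R : ℝ}
    (hR : 0 < R) (hR1 : R ≤ 1) :
    ∫⁻ y in (‖·‖) ⁻¹' Ico R 1, ‖gradient w y‖ₑ * ‖greenGradient y‖ₑ ≤
      (dirichletEnergy w * ENNReal.ofReal (-log R / (2 * π))) ^ (1 / 2 : ℝ) := by
  have hsub : (‖·‖) ⁻¹' Ico R 1 ⊆ unitDisk := fun y hy => hy.2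
  rw [one_div, ENNReal.le_rpow_inv_iff two_pos, ENNReal.rpow_two,
    ← lintegral_annulus_greenGradient_sq hR hR1]
  exact (lintegral_mul_sq_le (continuous_gradient hw).enorm.measurable.aemeasurable
    measurable_greenGradient.enorm.aemeasurable).trans
    (mul_le_mul_left (lintegral_mono_set hsub) _)

lemma enorm_zero_le_add_lintegral_greenKernel {w : ℂ → ℝ} (hw : ContDiff ℝ 1 w)
    (hs : tsupport w ⊆ unitDisk) {φ : ℂ → ℝ} {s R : ℝ} (hφ : IsTruncatedGreen φ s R) (hR : 0 < R)
    (hR1 : R ≤ 1) :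
    ‖w 0‖ₑ ≤ ‖∫ y in unitDisk, ⟪gradient w y, gradient φ y⟫‖ₑ +
      (∫⁻ y, hypGradNorm w y * greenKernel s y ∂hypMeasure +
        (dirichletEnergy w * ENNReal.ofReal (-log R / (2 * π))) ^ (1 / 2 : ℝ)) := by
  have hannulus : MeasurableSet ((‖·‖) ⁻¹' Ico R 1 : Set ℂ) := measurable_norm measurableSet_Ico
  have hg := (continuous_gradient hw).measurable
  have hG := measurable_greenGradient
  have hφint : IntegrableOn (fun y => ⟪gradient w y, gradient φ y⟫) unitDisk := by
    have hφ1 : ContDiff ℝ 1 φ := hφ.contDiff.of_le (mod_cast le_top)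
    have hcont : Continuous fun y => ⟪gradient w y, gradient φ y⟫ :=
      (continuous_gradient hw).inner (continuous_gradient hφ1)
    exact (hcont.continuousOn.integrableOn_compact (isCompact_closedBall 0 1)).mono_set
      (unitDisk_eq_ball ▸ ball_subset_closedBall)
  have hsplit : w 0 = (∫ y in unitDisk, ⟪gradient w y, gradient φ y⟫) +
      ∫ y in unitDisk, ⟪gradient w y, greenGradient y - gradient φ y⟫ := by
    simp only [inner_sub_right]
    rw [integral_sub (integrableOn_inner_gradient_greenGradient hw) hφint,
      setIntegral_inner_gradient_greenGradient hw hs, add_sub_cancel]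
  rw [hsplit]
  refine (enorm_add_le _ _).trans (add_le_add_right ?_ _)
  calc ‖∫ y in unitDisk, ⟪gradient w y, greenGradient y - gradient φ y⟫‖ₑ
      ≤ ∫⁻ y in unitDisk, ((ball 0 s).indicator (fun y => ‖gradient w y‖ₑ * ‖greenGradient y‖ₑ) y +
          ((‖·‖) ⁻¹' Ico R 1).indicator (fun y => ‖gradient w y‖ₑ * ‖greenGradient y‖ₑ) y) :=
        (enorm_integral_le_lintegral_enorm _).trans <| setLIntegral_mono' measurableSet_unitDisk
          fun y hy => hφ.enorm_inner_sub_le (gradient w y) hy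
    _ ≤ ∫⁻ y, hypGradNorm w y * greenKernel s y ∂hypMeasure +
          ∫⁻ y in (‖·‖) ⁻¹' Ico R 1, ‖gradient w y‖ₑ * ‖greenGradient y‖ₑ := by
        rw [lintegral_add_left (Measurable.indicator (by fun_prop) measurableSet_ball),
          ← lintegral_hypGradNorm_mul_greenKernel, lintegral_indicator hannulus]
        gcongr
        exact Measure.restrict_le_self
    _ ≤ _ := add_le_add_right (setLIntegral_annulus_gradient_mul_greenGradient_le hw hR hR1) _

/-- The Dirichlet pairing of `u ∘ η_ζ` with `φ`. -/
def shiftPairing (u φ : ℂ → ℝ) (ζ : ℂ) : ℝ :=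
  ∫ y in unitDisk, ⟪gradient (fun y => u (eta ζ y)) y, gradient φ y⟫

/-- The Green potential of the hyperbolic gradient norm of `u`, with the kernel cut off at
pseudo-hyperbolic distance `s`. -/
def greenPotential (u : ℂ → ℝ) (s : ℝ) (x : ℂ) : ℝ≥0∞ :=
  ∫⁻ z, hypGradNorm u z * greenKernel s (eta x z) ∂hypMeasure

lemma measurable_greenPotential {u : ℂ → ℝ} (hu : ContDiff ℝ 1 u) (s : ℝ) :
    Measurable (greenPotential u s) :=
  (((measurable_hypGradNorm hu).comp measurable_snd).mul
    ((measurable_greenKernel s).comp measurable_eta)).lintegral_prod_right'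

lemma lintegral_hypGradNorm_comp_eta_mul_greenKernel {u : ℂ → ℝ} (hu : Differentiable ℝ u) (s : ℝ)
    {x : ℂ} (hx : x ∈ unitDisk) :
    ∫⁻ y, hypGradNorm (fun y => u (eta (-x) y)) y * greenKernel s y ∂hypMeasure
      = greenPotential u s x := by
  have hx' := neg_mem_unitDisk hx
  rw [greenPotential, ← lintegral_hypMeasure_comp_eta hx' fun z =>
    hypGradNorm u z * greenKernel s (eta x z)]
  refine lintegral_congr_ae ?_
  filter_upwards [ae_mem_unitDisk] with y hy
  rw [hypGradNorm_comp_eta hx' hy (hu _), eta_eta_neg hx hy]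

lemma lintegral_greenPotential_sq_le {u : ℂ → ℝ} (hu : ContDiff ℝ 1 u) {s : ℝ} (hs : 0 ≤ s)
    (hs1 : s < 1) :
    ∫⁻ x, greenPotential u s x ^ 2 ∂hypMeasure ≤
      ENNReal.ofReal (-log (1 - s)) ^ 2 * dirichletEnergy u := by
  have hrow : ∀ᵐ x ∂hypMeasure, ∫⁻ z, greenKernel s (eta x z) ∂hypMeasure ≤
      ENNReal.ofReal (-log (1 - s)) := by
    filter_upwards [ae_mem_unitDisk] with x hx
    exact (lintegral_hypMeasure_comp_eta hx _).trans_le (lintegral_greenKernel_le hs hs1)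
  have hcol : ∀ᵐ z ∂hypMeasure, ∫⁻ x, greenKernel s (eta x z) ∂hypMeasure ≤
      ENNReal.ofReal (-log (1 - s)) := by
    simpa only [greenKernel_eq_of_norm_eq (norm_eta_comm _ _)] using hrow
  rw [sq (ENNReal.ofReal _), ← lintegral_hypGradNorm_sq]
  exact lintegral_sq_lintegral_mul_kernel_le (K := fun x z => greenKernel s (eta x z))
    (measurable_hypGradNorm hu)
    ((measurable_greenKernel s).comp measurable_eta) hrow hcol

lemma enorm_le_add_greenPotential {u : ℂ → ℝ} (hu : ContDiff ℝ 1 u) (hs : tsupport u ⊆ unitDisk)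
    {φ : ℂ → ℝ} {s R : ℝ} (hφ : IsTruncatedGreen φ s R) (hR : 0 < R) (hR1 : R ≤ 1) {x : ℂ}
    (hx : x ∈ unitDisk) :
    ‖u x‖ₑ ≤ ‖shiftPairing u φ (-x)‖ₑ +
      (greenPotential u s x +
        (dirichletEnergy u * ENNReal.ofReal (-log R / (2 * π))) ^ (1 / 2 : ℝ)) := by
  have hx' := neg_mem_unitDisk hx
  have hdiff := hu.differentiable one_ne_zero
  have hgrad : ∀ y ∈ unitDisk,
      gradient (etaPullback (-x) u) y = gradient (fun y => u (eta (-x) y)) y :=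
    fun y hy => gradient_etaPullback (-x) u hy
  have henergy : dirichletEnergy (etaPullback (-x) u) = dirichletEnergy u := by
    rw [← dirichletEnergy_comp_eta hdiff hx']
    exact setLIntegral_congr_fun measurableSet_unitDisk fun y hy => by rw [hgrad y hy]
  have hpotential : ∫⁻ y, hypGradNorm (etaPullback (-x) u) y * greenKernel s y ∂hypMeasure
      = greenPotential u s x := by
    rw [← lintegral_hypGradNorm_comp_eta_mul_greenKernel hdiff s hx]
    refine lintegral_congr_ae ?_
    filter_upwards [ae_mem_unitDisk] with y hy
    rw [hypGradNorm, hgrad y hy, hypGradNorm]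
  have htest : ∫ y in unitDisk, ⟪gradient (etaPullback (-x) u) y, gradient φ y⟫
      = shiftPairing u φ (-x) :=
    setIntegral_congr_fun measurableSet_unitDisk fun y hy => by rw [hgrad y hy]
  rw [← etaPullback_neg_zero x u, ← htest, ← hpotential, ← henergy]
  exact enorm_zero_le_add_lintegral_greenKernel (contDiff_etaPullback hu hs hx')
    (tsupport_etaPullback_subset hs hx') hφ hR hR1

/-- A smooth function with values in `[0, 1]` that is `1` on `[a, b]`, where `0 < a` and `b < 1`,
and vanishes outside `(a / 2, (1 + b) / 2)`. -/
def cutoff (a b q : ℝ) : ℝ :=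
  smoothTransition (2 * q / a - 1) * smoothTransition (2 * (1 - q) / (1 - b) - 1)

lemma contDiff_cutoff (a b : ℝ) : ContDiff ℝ (⊤ : ℕ∞) (cutoff a b) :=
  (smoothTransition.contDiff.comp (by fun_prop)).mul (smoothTransition.contDiff.comp (by fun_prop))

lemma cutoff_mem_Icc (a b q : ℝ) : cutoff a b q ∈ Icc (0 : ℝ) 1 :=
  ⟨mul_nonneg (smoothTransition.nonneg _) (smoothTransition.nonneg _),
    mul_le_one₀ (smoothTransition.le_one _) (smoothTransition.nonneg _) (smoothTransition.le_one _)⟩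

lemma cutoff_eq_one {a b q : ℝ} (ha : 0 < a) (hb : b < 1) (haq : a ≤ q) (hqb : q ≤ b) :
    cutoff a b q = 1 := by
  have hb' : 0 < 1 - b := sub_pos.mpr hb
  rw [cutoff, smoothTransition.one_of_one_le, smoothTransition.one_of_one_le, one_mul]
  · rw [le_sub_iff_add_le, le_div_iff₀ hb']
    linarith
  · rw [le_sub_iff_add_le, le_div_iff₀ ha]
    linarith

lemma cutoff_eq_zero_of_le {a b q : ℝ} (ha : 0 < a) (hq : q ≤ a / 2) : cutoff a b q = 0 := by
  rw [cutoff, smoothTransition.zero_of_nonpos, zero_mul]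
  rw [sub_nonpos, div_le_one ha]
  linarith

lemma cutoff_eq_zero_of_ge {a b q : ℝ} (hb : b < 1) (hq : (1 + b) / 2 ≤ q) : cutoff a b q = 0 := by
  rw [cutoff, mul_comm, smoothTransition.zero_of_nonpos, zero_mul]
  rw [sub_nonpos, div_le_one (sub_pos.mpr hb)]
  linarith

lemma contDiff_cutoff_div {a : ℝ} (ha : 0 < a) (b : ℝ) :
    ContDiff ℝ (⊤ : ℕ∞) fun q => cutoff a b q / q := by
  refine contDiff_iff_contDiffAt.mpr fun q => ?_
  by_cases hq : q < a / 2
  · refine (contDiffAt_const (c := (0 : ℝ))).congr_of_eventuallyEq ?_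
    filter_upwards [Iio_mem_nhds hq] with q' hq'
    rw [cutoff_eq_zero_of_le ha (le_of_lt hq'), zero_div]
  · have hq0 : 0 < q := (half_pos ha).trans_le (not_lt.mp hq)
    exact (contDiff_cutoff a b).contDiffAt.div contDiffAt_id (ne_of_gt hq0)

/-- The primitive vanishing at `1` of `cutoff a b q / q`: up to a constant, it is `log` on
`[a, b]`. -/
def truncatedLog (a b q : ℝ) : ℝ := ∫ x in (1 : ℝ)..q, cutoff a b x / x

lemma hasDerivAt_truncatedLog {a : ℝ} (ha : 0 < a) (b q : ℝ) :
    HasDerivAt (truncatedLog a b) (cutoff a b q / q) q :=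
  have hcont := (contDiff_cutoff_div ha b).continuous
  intervalIntegral.integral_hasDerivAt_right (hcont.intervalIntegrable _ _)
    (hcont.stronglyMeasurableAtFilter _ _) hcont.continuousAt

lemma contDiff_truncatedLog {a : ℝ} (ha : 0 < a) (b : ℝ) :
    ContDiff ℝ (⊤ : ℕ∞) (truncatedLog a b) := by
  have hderiv : deriv (truncatedLog a b) = fun q => cutoff a b q / q :=
    funext fun q => (hasDerivAt_truncatedLog ha b q).deriv
  rw [contDiff_infty_iff_deriv, hderiv]
  exact ⟨fun q => (hasDerivAt_truncatedLog ha b q).differentiableAt, contDiff_cutoff_div ha b⟩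

lemma truncatedLog_eq_zero {a b q : ℝ} (hb : b < 1) (hq : (1 + b) / 2 ≤ q) :
    truncatedLog a b q = 0 := by
  refine intervalIntegral.integral_zero_ae (.of_forall fun x hx => ?_)
  have hx' : (1 + b) / 2 ≤ x := (le_min (by linarith) hq).trans hx.1.le
  rw [cutoff_eq_zero_of_ge hb hx', zero_div]

/-- The Green function `-(2π)⁻¹ log |y|` with `log |y|²` replaced by its truncation, so that its
gradient is that of the Green function on the annulus `s ≤ |y| ≤ R`. -/
def truncatedGreen (s R : ℝ) (y : ℂ) : ℝ := -(4 * π)⁻¹ * truncatedLog (s ^ 2) (R ^ 2) (‖y‖ ^ 2)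

lemma gradient_truncatedGreen {s : ℝ} (hs : 0 < s) (R : ℝ) (y : ℂ) :
    gradient (truncatedGreen s R) y = cutoff (s ^ 2) (R ^ 2) (‖y‖ ^ 2) • greenGradient y := by
  have hderiv := hasDerivAt_truncatedLog (pow_pos hs 2) (R ^ 2) (‖y‖ ^ 2)
  have hgrad : HasGradientAt (truncatedGreen s R)
      (cutoff (s ^ 2) (R ^ 2) (‖y‖ ^ 2) • greenGradient y) y := by
    rw [hasGradientAt_iff_hasFDerivAt]
    refine ((hderiv.comp_hasFDerivAt y (hasStrictFDerivAt_norm_sq y).hasFDerivAt).const_mul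
      (-(4 * π)⁻¹)).congr_fderiv ?_
    ext v
    simp [greenGradient, -Complex.inner, -Complex.real_smul]
    ring
  exact hgrad.gradient

lemma isTruncatedGreen_truncatedGreen {s R : ℝ} (hs : 0 < s) (hR : 0 < R) (hR1 : R < 1) :
    IsTruncatedGreen (truncatedGreen s R) s R where
  contDiff := contDiff_const.mul ((contDiff_truncatedLog (pow_pos hs 2) _).comp
    (contDiff_norm_sq ℝ))
  tsupport_subset := by
    have hR2 : R ^ 2 < 1 := pow_lt_one₀ hR.le hR1 two_ne_zero
    have hclosed : IsClosed {y : ℂ | ‖y‖ ^ 2 ≤ (1 + R ^ 2) / 2} :=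
      isClosed_le (by fun_prop) continuous_const
    have hsub : {y : ℂ | ‖y‖ ^ 2 ≤ (1 + R ^ 2) / 2} ⊆ unitDisk := fun y hy =>
      (sq_lt_one_iff₀ (norm_nonneg y)).mp (lt_of_le_of_lt hy (by linarith))
    refine (closure_minimal (fun y hy => ?_) hclosed).trans hsub
    by_contra hlt
    exact hy (by rw [truncatedGreen, truncatedLog_eq_zero hR2 (not_le.mp hlt).le, mul_zero])
  norm_sub_le y := by
    obtain ⟨h0, h1⟩ := cutoff_mem_Icc (s ^ 2) (R ^ 2) (‖y‖ ^ 2)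
    have hsub : greenGradient y - gradient (truncatedGreen s R) y =
        (1 - cutoff (s ^ 2) (R ^ 2) (‖y‖ ^ 2)) • greenGradient y := by
      rw [gradient_truncatedGreen hs, sub_smul, one_smul]
    rw [hsub, norm_smul, norm_of_nonneg (sub_nonneg.mpr h1)]
    exact mul_le_of_le_one_left (norm_nonneg _) (by linarith)
  gradient_eq y hsy hyR := by
    rw [gradient_truncatedGreen hs, cutoff_eq_one (pow_pos hs 2)
      (pow_lt_one₀ hR.le hR1 two_ne_zero) (by gcongr) (by gcongr), one_smul]

/-! ### Distribution functions -/

lemma hypMeasure_lt_abs_le {u : ℂ → ℝ} (hu : ContDiff ℝ 1 u) (hE : dirichletEnergy u ≤ 1)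
    {s τ t : ℝ} (hs : 0 ≤ s) (hs1 : s < 1) (hτ : 0 ≤ τ) (ht : τ < t)
    (h : ∀ x ∈ unitDisk, ‖u x‖ₑ ≤ ENNReal.ofReal τ + greenPotential u s x) :
    hypMeasure {x | t < |u x|} ≤ ENNReal.ofReal ((-log (1 - s) / (t - τ)) ^ 2) := by
  have ht' : 0 < t - τ := sub_pos.mpr ht
  have hL : 0 ≤ -log (1 - s) := neg_nonneg.mpr (log_nonpos (by linarith) (by linarith))
  have hsub : {x | t < |u x|} ≤ᵐ[hypMeasure]
      {x | ENNReal.ofReal ((t - τ) ^ 2) ≤ greenPotential u s x ^ 2} := by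
    filter_upwards [ae_mem_unitDisk] with x hx (hxt : t < |u x|)
    change ENNReal.ofReal ((t - τ) ^ 2) ≤ greenPotential u s x ^ 2
    have hpot : ENNReal.ofReal (t - τ) ≤ greenPotential u s x := by
      rw [ENNReal.ofReal_sub _ hτ, tsub_le_iff_left]
      refine le_trans ?_ (h x hx)
      rw [enorm_eq_ofReal_abs]
      exact ENNReal.ofReal_le_ofReal hxt.le
    rw [ENNReal.ofReal_pow ht'.le]
    gcongr
  calc hypMeasure {x | t < |u x|}
      ≤ hypMeasure {x | ENNReal.ofReal ((t - τ) ^ 2) ≤ greenPotential u s x ^ 2} :=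
        measure_mono_ae hsub
    _ ≤ (∫⁻ x, greenPotential u s x ^ 2 ∂hypMeasure) / ENNReal.ofReal ((t - τ) ^ 2) :=
        meas_ge_le_lintegral_div ((measurable_greenPotential hu s).pow_const 2).aemeasurable
          (by simpa using ht'.ne') ENNReal.ofReal_ne_top
    _ ≤ ENNReal.ofReal (-log (1 - s)) ^ 2 / ENNReal.ofReal ((t - τ) ^ 2) := by
        gcongr
        exact (lintegral_greenPotential_sq_le hu hs hs1).trans (mul_le_of_le_one_right' hE)
    _ = ENNReal.ofReal ((-log (1 - s) / (t - τ)) ^ 2) := by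
        rw [div_pow, ENNReal.ofReal_div_of_pos (by positivity), ENNReal.ofReal_pow hL]

lemma hypMeasure_lt_abs_le_of_isTruncatedGreen {u : ℂ → ℝ} (hu : ContDiff ℝ 1 u)
    (hsupp : tsupport u ⊆ unitDisk) (hE : dirichletEnergy u ≤ 1) {φ : ℂ → ℝ} {s R δ t : ℝ}
    (hφ : IsTruncatedGreen φ s R) (hs : 0 ≤ s) (hs1 : s < 1) (hR : 0 < R) (hR1 : R ≤ 1)
    (hδ : ∀ ζ ∈ unitDisk, |shiftPairing u φ ζ| ≤ δ) (ht : δ + √(-log R / (2 * π)) < t) :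
    hypMeasure {x | t < |u x|} ≤
      ENNReal.ofReal ((-log (1 - s) / (t - (δ + √(-log R / (2 * π))))) ^ 2) := by
  have hδ0 : 0 ≤ δ := (abs_nonneg _).trans (hδ 0 zero_mem_unitDisk)
  refine hypMeasure_lt_abs_le hu hE hs hs1 (by positivity) ht fun x hx => ?_
  have hannulus : (dirichletEnergy u * ENNReal.ofReal (-log R / (2 * π))) ^ (1 / 2 : ℝ) ≤
      ENNReal.ofReal √(-log R / (2 * π)) := by
    have hlog : 0 ≤ -log R / (2 * π) :=
      div_nonneg (neg_nonneg.mpr (log_nonpos hR.le hR1)) (by positivity)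
    rw [sqrt_eq_rpow, ← ENNReal.ofReal_rpow_of_nonneg hlog (by norm_num)]
    exact ENNReal.rpow_le_rpow (mul_le_of_le_one_left' hE) (by norm_num)
  have hpairing : ‖shiftPairing u φ (-x)‖ₑ ≤ ENNReal.ofReal δ := by
    rw [enorm_eq_ofReal_abs]
    exact ENNReal.ofReal_le_ofReal (hδ _ (neg_mem_unitDisk hx))
  calc ‖u x‖ₑ ≤ ‖shiftPairing u φ (-x)‖ₑ + (greenPotential u s x +
        (dirichletEnergy u * ENNReal.ofReal (-log R / (2 * π))) ^ (1 / 2 : ℝ)) :=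
        enorm_le_add_greenPotential hu hsupp hφ hR hR1 hx
    _ ≤ ENNReal.ofReal δ + (greenPotential u s x + ENNReal.ofReal √(-log R / (2 * π))) := by
        gcongr
    _ = ENNReal.ofReal (δ + √(-log R / (2 * π))) + greenPotential u s x := by
        rw [ENNReal.ofReal_add hδ0 (sqrt_nonneg _), add_assoc, add_comm (greenPotential u s x)]

/-- The Moser–Trudinger-type bound for the distribution function of `|u|`, obtained from the zero
test function with `s = R = exp (-2πκ²t²)`, the radius for which the contribution of `|y| ≥ R` is
`κt`. -/
def distributionBound (κ t : ℝ) : ℝ :=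
  (-log (1 - exp (-(2 * π * κ ^ 2 * t ^ 2))) / ((1 - κ) * t)) ^ 2

lemma hypMeasure_lt_abs_le_distributionBound {u : ℂ → ℝ} (hu : ContDiff ℝ 1 u)
    (hsupp : tsupport u ⊆ unitDisk) (hE : dirichletEnergy u ≤ 1) {κ t : ℝ} (hκ : 0 < κ)
    (hκ1 : κ < 1) (ht : 0 < t) :
    hypMeasure {x | t < |u x|} ≤ ENNReal.ofReal (distributionBound κ t) := by
  set s := exp (-(2 * π * κ ^ 2 * t ^ 2)) with hs
  have hs1 : s < 1 := exp_lt_one_iff.mpr (by rw [neg_lt_zero]; positivity)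
  have hsqrt : √(-log s / (2 * π)) = κ * t := by
    rw [hs, log_exp, neg_neg, ← sqrt_sq (by positivity : 0 ≤ κ * t)]
    congr 1
    field_simp
  have h := hypMeasure_lt_abs_le_of_isTruncatedGreen (δ := 0) (t := t) hu hsupp hE
    (isTruncatedGreen_zero le_rfl) (exp_pos _).le hs1 (exp_pos _) hs1.le
    (fun ζ _ => by simp [shiftPairing]) (by rw [hsqrt]; nlinarith)
  rwa [hsqrt, zero_add, ← one_sub_mul] at h

lemma tendstoUniformlyOn_of_forall_choice {ι α β : Type*} [UniformSpace β] {F : ι → α → β} {b : β}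
    {l : Filter ι} {S : Set α} (hS : S.Nonempty)
    (h : ∀ x : ι → α, (∀ i, x i ∈ S) → Tendsto (fun i => F i (x i)) l (𝓝 b)) :
    TendstoUniformlyOn F (fun _ => b) l S := by
  intro V hV
  have hworst : ∀ i, ∃ x ∈ S, (b, F i x) ∈ V → ∀ y ∈ S, (b, F i y) ∈ V := fun i => by
    by_cases hall : ∀ y ∈ S, (b, F i y) ∈ V
    · exact ⟨hS.some, hS.some_mem, fun _ => hall⟩
    · push Not at hall
      obtain ⟨x, hx, hbad⟩ := hall
      exact ⟨x, hx, fun hgood => absurd hgood hbad⟩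
  choose x hxS hx using hworst
  filter_upwards [h x hxS (UniformSpace.ball_mem_nhds b hV)] with i hi using hx i hi

/-- All Möbius shifts `u_k ∘ η_{ζ_k}` of the sequence tend weakly to `0` in `H_0^1(B)`. For bounded
sequences it is enough to test against smooth functions with compact support. -/
def MobiusVanishing (u : ℕ → ℂ → ℝ) : Prop :=
  ∀ ζ : ℕ → ℂ, (∀ k, ζ k ∈ unitDisk) →
    ∀ φ : ℂ → ℝ, ContDiff ℝ (⊤ : ℕ∞) φ → HasCompactSupport φ → tsupport φ ⊆ unitDisk →
      Tendsto (fun k => shiftPairing (u k) φ (ζ k)) atTop (𝓝 0)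

lemma MobiusVanishing.tendstoUniformlyOn {u : ℕ → ℂ → ℝ} (hu : MobiusVanishing u) {φ : ℂ → ℝ}
    (hφ : ContDiff ℝ (⊤ : ℕ∞) φ) (hsupp : tsupport φ ⊆ unitDisk) :
    TendstoUniformlyOn (fun k => shiftPairing (u k) φ) (fun _ => 0) atTop unitDisk :=
  tendstoUniformlyOn_of_forall_choice ⟨0, zero_mem_unitDisk⟩ fun ζ hζ =>
    hu ζ hζ φ hφ (hasCompactSupport_of_tsupport_subset_unitDisk hsupp) hsupp

lemma MobiusVanishing.tendsto_hypMeasure_lt_abs {u : ℕ → ℂ → ℝ} (hvanish : MobiusVanishing u)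
    (hreg : ∀ k, ContDiff ℝ 1 (u k)) (hsupp : ∀ k, tsupport (u k) ⊆ unitDisk)
    (hE : ∀ k, dirichletEnergy (u k) ≤ 1) {t : ℝ} (ht : 0 < t) :
    Tendsto (fun k => hypMeasure {x | t < |u k x|}) atTop (𝓝 0) := by
  refine ENNReal.tendsto_nhds_zero.mpr fun ε hε => ?_
  obtain ⟨R, hRt, hR0, hR1⟩ : ∃ R, √(-log R / (2 * π)) < t / 4 ∧ 0 < R ∧ R < 1 := by
    have hcont : ContinuousAt (fun R : ℝ => √(-log R / (2 * π))) 1 := by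
      fun_prop (disch := norm_num)
    have hlim := hcont.tendsto.mono_left (nhdsWithin_le_nhds (s := Iio 1))
    simp only [log_one, neg_zero, zero_div, sqrt_zero] at hlim
    exact ((hlim.eventually_lt_const (by positivity)).and
      (Ioo_mem_nhdsLT one_pos)).exists
  obtain ⟨s, hsε, hs0, hs1⟩ : ∃ s, ENNReal.ofReal ((-log (1 - s) / (t / 2)) ^ 2) < ε ∧
      0 < s ∧ s < 1 := by
    have hcont : ContinuousAt (fun s : ℝ => ENNReal.ofReal ((-log (1 - s) / (t / 2)) ^ 2)) 0 :=
      ENNReal.continuous_ofReal.continuousAt.comp (by fun_prop (disch := norm_num))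
    have hlim := hcont.tendsto.mono_left (nhdsWithin_le_nhds (s := Ioi 0))
    simp only [sub_zero, log_one, neg_zero, zero_div, zero_pow two_ne_zero,
      ENNReal.ofReal_zero] at hlim
    exact ((hlim.eventually_lt_const hε).and (Ioo_mem_nhdsGT one_pos)).exists
  have hφ := isTruncatedGreen_truncatedGreen hs0 hR0 hR1
  filter_upwards [Metric.tendstoUniformlyOn_iff.mp
    (hvanish.tendstoUniformlyOn hφ.contDiff hφ.tsupport_subset) (t / 4) (by positivity)] with k hk
  have hpairing : ∀ ζ ∈ unitDisk, |shiftPairing (u k) (truncatedGreen s R) ζ| ≤ t / 4 :=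
    fun ζ hζ => by simpa using (hk ζ hζ).le
  refine (hypMeasure_lt_abs_le_of_isTruncatedGreen (hreg k) (hsupp k) (hE k) hφ hs0.le hs1 hR0
    hR1.le hpairing (by linarith)).trans (le_trans ?_ hsε.le)
  have hL : 0 ≤ -log (1 - s) := neg_nonneg.mpr (log_nonpos (by linarith) (by linarith))
  have hgap : t / 2 ≤ t - (t / 4 + √(-log R / (2 * π))) := by linarith
  refine ENNReal.ofReal_le_ofReal ?_
  gcongr
  exact div_nonneg hL ((half_pos ht).le.trans hgap)

/-! ### Growth functions and the layer cake formula -/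

/-- The growth function `t ^ r e^{p t²}` that dominates the nonlinearity, for `0 ≤ t`. -/
def growth (r p t : ℝ) : ℝ := t ^ r * exp (p * t ^ 2)

/-- The derivative of `growth r p`. -/
def growthDeriv (r p t : ℝ) : ℝ := t ^ (r - 1) * (r + 2 * p * t ^ 2) * exp (p * t ^ 2)

lemma hasDerivAt_growth {r : ℝ} (hr : 1 ≤ r) (p t : ℝ) :
    HasDerivAt (growth r p) (growthDeriv r p t) t := by
  have hpow : t ^ r * t = t ^ (r - 1) * t ^ 2 := by
    rcases eq_or_ne t 0 with rfl | ht
    · simp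
    · rw [rpow_sub_one ht]
      field_simp
  have hexp := ((hasDerivAt_pow 2 t).const_mul p).exp
  refine ((hasDerivAt_rpow_const (Or.inr hr)).mul hexp).congr_deriv ?_
  rw [growthDeriv]
  norm_num
  linear_combination 2 * p * exp (p * t ^ 2) * hpow

lemma continuous_growthDeriv {r : ℝ} (hr : 1 ≤ r) (p : ℝ) : Continuous (growthDeriv r p) := by
  have hpow : Continuous fun t : ℝ => t ^ (r - 1) := continuous_rpow_const (by linarith)
  unfold growthDeriv
  fun_prop

lemma growthDeriv_nonneg {r p t : ℝ} (hr : 0 ≤ r) (hp : 0 ≤ p) (ht : 0 ≤ t) :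
    0 ≤ growthDeriv r p t := by
  unfold growthDeriv
  positivity

lemma integral_growthDeriv {r : ℝ} (hr : 1 ≤ r) (p t : ℝ) :
    ∫ x in (0 : ℝ)..t, growthDeriv r p x = growth r p t := by
  rw [intervalIntegral.integral_eq_sub_of_hasDerivAt (fun x _ => hasDerivAt_growth hr p x)
    ((continuous_growthDeriv hr p).intervalIntegrable _ _), growth, growth,
    zero_rpow (by linarith), zero_mul, sub_zero]

lemma lintegral_growth_abs_eq_lintegral_meas_lt {α : Type*} [MeasurableSpace α] (μ : Measure α)
    {f : α → ℝ} (hf : AEMeasurable f μ) {r p : ℝ} (hr : 1 ≤ r) (hp : 0 ≤ p) :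
    ∫⁻ x, ENNReal.ofReal (growth r p |f x|) ∂μ =
      ∫⁻ t in Ioi 0, μ {x | t < |f x|} * ENNReal.ofReal (growthDeriv r p t) := by
  simp only [← integral_growthDeriv hr p]
  refine lintegral_comp_eq_lintegral_meas_lt_mul μ (ae_of_all _ fun x => abs_nonneg (f x))
    hf.abs (fun t _ => (continuous_growthDeriv hr p).intervalIntegrable _ _) ?_
  filter_upwards [ae_restrict_mem measurableSet_Ioi] with t ht using
    growthDeriv_nonneg (zero_le_one.trans hr) hp (le_of_lt ht)

lemma neg_log_one_sub_exp_neg_le {a q : ℝ} (ha : 0 < a) (hq : 0 < q) (hq1 : q ≤ 1) :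
    -log (1 - exp (-a)) ≤ q⁻¹ * a ^ (-q) * exp (-((1 - q) * a)) := by
  have hlt : 0 < 1 - exp (-a) := sub_pos.mpr (exp_lt_one_iff.mpr (neg_lt_zero.mpr ha))
  set y := (1 - exp (-a))⁻¹ with hy
  have hy0 : 0 < y := inv_pos.mpr hlt
  have hy1 : 1 ≤ y := (one_le_inv₀ hlt).mpr (sub_le_self _ (exp_pos _).le)
  have hya : y ≤ exp a / a := by
    rw [hy, inv_le_comm₀ hlt (by positivity), inv_div, div_le_iff₀ (exp_pos _), one_sub_mul,
      ← exp_add, neg_add_cancel, exp_zero]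
    linarith [add_one_le_exp a]
  have hyq : y ^ q * (1 - exp (-a)) ≤ 1 := calc
    y ^ q * (1 - exp (-a)) ≤ y * (1 - exp (-a)) := by
      gcongr
      exact rpow_le_self_of_one_le hy1 hq1
    _ = 1 := inv_mul_cancel₀ hlt.ne'
  calc -log (1 - exp (-a)) = log y := (log_inv _).symm
    _ = q⁻¹ * log (y ^ q) := by rw [log_rpow hy0, inv_mul_cancel_left₀ hq.ne']
    _ ≤ q⁻¹ * (y ^ q * exp (-a)) := by
        gcongr
        linarith [log_le_sub_one_of_pos (rpow_pos_of_pos hy0 q)]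
    _ ≤ q⁻¹ * ((exp a / a) ^ q * exp (-a)) := by gcongr
    _ = q⁻¹ * a ^ (-q) * exp (-((1 - q) * a)) := by
        rw [div_rpow (exp_pos a).le ha.le, ← exp_mul, rpow_neg ha.le, div_eq_mul_inv,
          mul_right_comm, ← exp_add, mul_comm (exp _), mul_assoc]
        ring_nf

lemma distributionBound_nonneg (κ t : ℝ) : 0 ≤ distributionBound κ t := sq_nonneg _

lemma distributionBound_le {κ q t : ℝ} (hκ : 0 < κ) (hq : 0 < q) (hq1 : q ≤ 1) (ht : 0 < t) :
    distributionBound κ t ≤ ((q * (2 * π * κ ^ 2) ^ q * (1 - κ)) ^ 2)⁻¹ *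
      (t ^ (-2 - 4 * q) * exp (-((1 - q) * (4 * π * κ ^ 2)) * t ^ 2)) := by
  have hlog := neg_log_one_sub_exp_neg_le (a := 2 * π * κ ^ 2 * t ^ 2) (by positivity) hq hq1
  have hlog0 : 0 ≤ -log (1 - exp (-(2 * π * κ ^ 2 * t ^ 2))) :=
    neg_nonneg.mpr (log_nonpos
      (sub_nonneg.mpr (exp_le_one_iff.mpr (by rw [neg_nonpos]; positivity)))
      (sub_le_self _ (exp_pos _).le))
  have hbase : (2 * π * κ ^ 2 * t ^ 2) ^ (-q) = ((2 * π * κ ^ 2) ^ q)⁻¹ * t ^ (-2 * q) := by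
    rw [rpow_neg (by positivity), mul_rpow (by positivity) (by positivity), mul_inv, neg_mul,
      rpow_neg ht.le, rpow_mul ht.le, rpow_two]
  have hpow : t ^ (-2 - 4 * q) = (t ^ (-2 * q)) ^ 2 * (t ^ 2)⁻¹ := by
    rw [← rpow_mul_natCast ht.le, ← rpow_natCast t 2, ← rpow_neg ht.le, ← rpow_add ht]
    congr 1
    push_cast
    ring
  have hexp : exp (-((1 - q) * (4 * π * κ ^ 2)) * t ^ 2) =
      exp (-((1 - q) * (2 * π * κ ^ 2 * t ^ 2))) ^ 2 := by
    rw [← exp_nat_mul]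
    congr 1
    push_cast
    ring
  calc distributionBound κ t
      ≤ (q⁻¹ * (2 * π * κ ^ 2 * t ^ 2) ^ (-q) * exp (-((1 - q) * (2 * π * κ ^ 2 * t ^ 2)))) ^ 2 /
          ((1 - κ) * t) ^ 2 := by
        rw [distributionBound, div_pow]
        gcongr
    _ = _ := by
        rw [hbase, hpow, hexp]
        simp only [div_eq_mul_inv, mul_pow, mul_inv, inv_pow]
        ring

lemma distributionBound_mul_growthDeriv_le {r p κ q t : ℝ} (hr : 0 ≤ r) (hp : 0 ≤ p) (hκ : 0 < κ)
    (hq : 0 < q) (hq1 : q ≤ 1) (ht : 0 < t) :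
    distributionBound κ t * growthDeriv r p t ≤ ((q * (2 * π * κ ^ 2) ^ q * (1 - κ)) ^ 2)⁻¹ *
      (r * (t ^ (r - 3 - 4 * q) * exp (-((1 - q) * (4 * π * κ ^ 2) - p) * t ^ 2)) +
        2 * p * (t ^ (r - 1 - 4 * q) * exp (-((1 - q) * (4 * π * κ ^ 2) - p) * t ^ 2))) := by
  have hpow₁ : t ^ (r - 3 - 4 * q) = t ^ (-2 - 4 * q) * t ^ (r - 1) := by
    rw [← rpow_add ht]
    ring_nf
  have hpow₂ : t ^ (r - 1 - 4 * q) = t ^ (-2 - 4 * q) * t ^ (r - 1) * t ^ 2 := by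
    rw [← rpow_add ht, ← rpow_two, ← rpow_add ht]
    ring_nf
  have hexp : exp (-((1 - q) * (4 * π * κ ^ 2) - p) * t ^ 2) =
      exp (-((1 - q) * (4 * π * κ ^ 2)) * t ^ 2) * exp (p * t ^ 2) := by
    rw [← exp_add]
    ring_nf
  refine (mul_le_mul_of_nonneg_right (distributionBound_le hκ hq hq1 ht)
    (growthDeriv_nonneg hr hp ht.le)).trans_eq ?_
  rw [growthDeriv, hpow₁, hpow₂, hexp]
  ring

lemma integrableOn_distributionBound_mul_growthDeriv {r p κ : ℝ} (hr : 2 < r) (hp : 0 ≤ p)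
    (hκ : 0 < κ) (hpκ : p < 4 * π * κ ^ 2) :
    IntegrableOn (fun t => distributionBound κ t * growthDeriv r p t) (Ioi 0) := by
  have hr1 : 1 ≤ r := by linarith
  have hb0 : 0 < 4 * π * κ ^ 2 := by positivity
  obtain ⟨q, hq0, hq⟩ : ∃ q, 0 < q ∧ q < min ((r - 2) / 4) (1 - p / (4 * π * κ ^ 2)) :=
    exists_between (lt_min (by linarith) (sub_pos.mpr ((div_lt_one hb0).mpr hpκ)))
  obtain ⟨hqr, hqp⟩ := lt_min_iff.mp hq
  have hq1 : q ≤ 1 := hqp.le.trans (sub_le_self _ (by positivity))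
  have hc0 : 0 < (1 - q) * (4 * π * κ ^ 2) - p := by
    rw [sub_pos, ← div_lt_iff₀ hb0]
    linarith
  have hdom := (((integrableOn_rpow_mul_exp_neg_mul_sq hc0
    (by linarith : -1 < r - 3 - 4 * q)).const_mul r).add
    ((integrableOn_rpow_mul_exp_neg_mul_sq hc0
      (by linarith : -1 < r - 1 - 4 * q)).const_mul (2 * p))).const_mul
      ((q * (2 * π * κ ^ 2) ^ q * (1 - κ)) ^ 2)⁻¹
  refine hdom.mono' ?_ ?_
  · have hmeas := (continuous_growthDeriv hr1 p).measurable
    unfold distributionBound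
    exact Measurable.aestronglyMeasurable (by fun_prop)
  · filter_upwards [ae_restrict_mem measurableSet_Ioi] with t (ht : 0 < t)
    have hnonneg := mul_nonneg (distributionBound_nonneg κ t)
      (growthDeriv_nonneg (zero_le_one.trans hr1) hp ht.le)
    rw [norm_of_nonneg hnonneg]
    exact distributionBound_mul_growthDeriv_le (zero_le_one.trans hr1) hp hκ hq0 hq1 ht

lemma exists_lt_four_pi_mul_sq {p : ℝ} (hp : p < 4 * π) :
    ∃ κ, 0 < κ ∧ κ < 1 ∧ p < 4 * π * κ ^ 2 := by
  have hcont : ContinuousAt (fun κ : ℝ => 4 * π * κ ^ 2) 1 := by fun_prop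
  have hlim := hcont.tendsto.mono_left (nhdsWithin_le_nhds (s := Iio 1))
  rw [one_pow, mul_one] at hlim
  obtain ⟨κ, hpκ, hκ0, hκ1⟩ :=
    ((hlim.eventually_const_lt hp).and (Ioo_mem_nhdsLT one_pos)).exists
  exact ⟨κ, hκ0, hκ1, hpκ⟩

lemma hypMeasure_lt_abs_mul_growthDeriv_le {u : ℂ → ℝ} (hu : ContDiff ℝ 1 u)
    (hsupp : tsupport u ⊆ unitDisk) (hE : dirichletEnergy u ≤ 1) {κ : ℝ} (hκ : 0 < κ)
    (hκ1 : κ < 1) (r p : ℝ) :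
    ∀ᵐ t ∂volume.restrict (Ioi 0),
      hypMeasure {x | t < |u x|} * ENNReal.ofReal (growthDeriv r p t) ≤
        ENNReal.ofReal (distributionBound κ t * growthDeriv r p t) := by
  filter_upwards [ae_restrict_mem measurableSet_Ioi] with t ht
  rw [ENNReal.ofReal_mul (distributionBound_nonneg κ t)]
  gcongr
  exact hypMeasure_lt_abs_le_distributionBound hu hsupp hE hκ hκ1 ht

lemma lintegral_growth_lt_top {u : ℂ → ℝ} (hu : ContDiff ℝ 1 u) (hsupp : tsupport u ⊆ unitDisk)
    (hE : dirichletEnergy u ≤ 1) {r p : ℝ} (hr : 2 < r) (hp0 : 0 ≤ p) (hp : p < 4 * π) :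
    ∫⁻ x, ENNReal.ofReal (growth r p |u x|) ∂hypMeasure < ∞ := by
  obtain ⟨κ, hκ0, hκ1, hpκ⟩ := exists_lt_four_pi_mul_sq hp
  rw [lintegral_growth_abs_eq_lintegral_meas_lt hypMeasure hu.continuous.measurable.aemeasurable
    (by linarith) hp0]
  exact (lintegral_mono_ae (hypMeasure_lt_abs_mul_growthDeriv_le hu hsupp hE hκ0 hκ1 r p)).trans_lt
    (integrableOn_distributionBound_mul_growthDeriv hr hp0 hκ0 hpκ).lintegral_lt_top

lemma MobiusVanishing.tendsto_lintegral_growth {u : ℕ → ℂ → ℝ} (hvanish : MobiusVanishing u)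
    (hreg : ∀ k, ContDiff ℝ 1 (u k)) (hsupp : ∀ k, tsupport (u k) ⊆ unitDisk)
    (hE : ∀ k, dirichletEnergy (u k) ≤ 1) {r p : ℝ} (hr : 2 < r) (hp0 : 0 ≤ p)
    (hp : p < 4 * π) :
    Tendsto (fun k => ∫⁻ x, ENNReal.ofReal (growth r p |u k x|) ∂hypMeasure) atTop (𝓝 0) := by
  have hr1 : 1 ≤ r := by linarith
  obtain ⟨κ, hκ0, hκ1, hpκ⟩ := exists_lt_four_pi_mul_sq hp
  simp only [fun k => lintegral_growth_abs_eq_lintegral_meas_lt hypMeasure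
    (hreg k).continuous.measurable.aemeasurable hr1 hp0]
  rw [← lintegral_zero (α := ℝ) (μ := volume.restrict (Ioi 0))]
  refine tendsto_lintegral_of_dominated_convergence _ (fun k => ?_)
    (fun k => hypMeasure_lt_abs_mul_growthDeriv_le (hreg k) (hsupp k) (hE k) hκ0 hκ1 r p)
    (integrableOn_distributionBound_mul_growthDeriv hr hp0 hκ0 hpκ).lintegral_lt_top.ne ?_
  · have hanti : Antitone fun t => hypMeasure {x | t < |u k x|} :=
      fun _ _ hst => measure_mono fun _ hx => hst.trans_lt hx
    exact hanti.measurable.mul (continuous_growthDeriv hr1 p).measurable.ennreal_ofReal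
  · filter_upwards [ae_restrict_mem measurableSet_Ioi] with t ht
    simpa only [zero_mul] using ENNReal.Tendsto.mul_const
      (hvanish.tendsto_hypMeasure_lt_abs hreg hsupp hE ht) (Or.inr ENNReal.ofReal_ne_top)

lemma dirichletEnergy_le_one {u : ℂ → ℝ} (hu : ContDiff ℝ 1 u)
    (h : ∫ x in unitDisk, ‖gradient u x‖ ^ 2 ≤ 1) : dirichletEnergy u ≤ 1 := by
  have hint : IntegrableOn (fun x => ‖gradient u x‖ ^ 2) unitDisk :=
    (((continuous_gradient hu).norm.pow 2).continuousOn.integrableOn_compact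
      (isCompact_closedBall 0 1)).mono_set (unitDisk_eq_ball ▸ ball_subset_closedBall)
  have heq : dirichletEnergy u = ENNReal.ofReal (∫ x in unitDisk, ‖gradient u x‖ ^ 2) := by
    rw [ofReal_integral_eq_lintegral_ofReal hint (ae_of_all _ fun x => by positivity)]
    simp only [dirichletEnergy, ENNReal.ofReal_pow (norm_nonneg _), ofReal_norm]
  rw [heq]
  exact ENNReal.ofReal_le_one.mpr h

lemma lintegral_enorm_div_le_mul_lintegral_growth {F : ℝ → ℝ} {C r p : ℝ}
    (hF : ∀ s, |F s| ≤ C * |s| ^ r * exp (p * s ^ 2)) (u : ℂ → ℝ) :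
    ∫⁻ x in unitDisk, ‖F (u x) / (1 - ‖x‖ ^ 2) ^ 2‖ₑ ≤
      ENNReal.ofReal C * ∫⁻ x, ENNReal.ofReal (growth r (max p 0) |u x|) ∂hypMeasure := by
  have hC : 0 ≤ C :=
    nonneg_of_mul_nonneg_left (by simpa using (abs_nonneg _).trans (hF 1)) (exp_pos p)
  rw [← lintegral_const_mul' _ _ ENNReal.ofReal_ne_top, lintegral_hypMeasure]
  refine lintegral_mono fun x => ?_
  rw [← ENNReal.ofReal_mul hC, ← ENNReal.ofReal_mul (by positivity), enorm_eq_ofReal_abs, abs_div,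
    abs_of_nonneg (by positivity : 0 ≤ (1 - ‖x‖ ^ 2) ^ 2), div_eq_inv_mul]
  gcongr
  calc |F (u x)| ≤ C * |u x| ^ r * exp (p * u x ^ 2) := hF _
    _ ≤ C * growth r (max p 0) |u x| := by
        rw [growth, sq_abs, mul_assoc]
        gcongr
        exact le_max_left _ _

theorem mobius_cocompactness_general {u : ℕ → ℂ → ℝ} (hreg : ∀ k, ContDiff ℝ 1 (u k))
    (hsupp : ∀ k, tsupport (u k) ⊆ unitDisk)
    (hnorm : ∀ k, (∫ x in unitDisk, ‖gradient (u k) x‖ ^ 2) ≤ 1) (hvanish : MobiusVanishing u)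
    {F : ℝ → ℝ} (hF : Measurable F) {C r p : ℝ} (hr : 2 < r) (hp : p < 4 * π)
    (hgrowth : ∀ s : ℝ, |F s| ≤ C * |s| ^ r * exp (p * s ^ 2)) :
    (∀ k, IntegrableOn (fun x => F (u k x) / (1 - ‖x‖ ^ 2) ^ 2) unitDisk) ∧
      Tendsto (fun k => ∫ x in unitDisk, F (u k x) / (1 - ‖x‖ ^ 2) ^ 2) atTop (𝓝 0) := by
  have hE k : dirichletEnergy (u k) ≤ 1 := dirichletEnergy_le_one (hreg k) (hnorm k)
  have hp' : max p 0 < 4 * π := max_lt hp (by positivity)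
  have hbound k := lintegral_enorm_div_le_mul_lintegral_growth hgrowth (u k)
  refine ⟨fun k => ⟨?_, ?_⟩, ?_⟩
  · have hu := (hreg k).continuous.measurable
    exact Measurable.aestronglyMeasurable (by fun_prop)
  · exact (hbound k).trans_lt (ENNReal.mul_lt_top ENNReal.ofReal_lt_top
      (lintegral_growth_lt_top (hreg k) (hsupp k) (hE k) hr (le_max_right p 0) hp'))
  · have hlim := ENNReal.Tendsto.const_mul (a := ENNReal.ofReal C)
      (hvanish.tendsto_lintegral_growth hreg hsupp hE hr (le_max_right p 0) hp')
      (Or.inr ENNReal.ofReal_ne_top)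
    rw [mul_zero] at hlim
    exact tendsto_zero_iff_enorm_tendsto_zero.mpr <| tendsto_of_tendsto_of_tendsto_of_le_of_le
      tendsto_const_nhds hlim (fun _ => zero_le)
      fun k => (enorm_integral_le_lintegral_enorm _).trans (hbound k)

/-- Cocompactness relative to the Möbius group: if `‖∇u_k‖₂ = 1` and
`u_k ∘ η_{ζ_k} ⇀ 0` for every sequence `ζ_k ∈ B`, then `∫_B F(u_k) dμ → 0` for every
continuous `F` with `|F(s)| ≤ C|s|^r e^{p s²}`, `r > 2`, `p < 4π`. -/
theorem mobius_cocompactness (u : ℕ → ℂ → ℝ)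
    (hreg : ∀ k, ContDiff ℝ 1 (u k)) (hsupp : ∀ k, tsupport (u k) ⊆ unitDisk)
    (hnorm : ∀ k, (∫ x in unitDisk, ‖gradient (u k) x‖ ^ 2) = 1)
    (hvanish : ∀ ζ : ℕ → ℂ, (∀ k, ζ k ∈ unitDisk) →
      ∀ φ : ℂ → ℝ, ContDiff ℝ (⊤ : ℕ∞) φ → HasCompactSupport φ → tsupport φ ⊆ unitDisk →
      Tendsto (fun k =>
          ∫ x in unitDisk, ⟪gradient (fun y => u k (eta (ζ k) y)) x, gradient φ x⟫)
        atTop (𝓝 0))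
    (F : ℝ → ℝ) (hF : Continuous F) (C r p : ℝ) (hC : 0 < C) (hr : 2 < r) (hp : p < 4 * π)
    (hgrowth : ∀ s : ℝ, |F s| ≤ C * |s| ^ r * Real.exp (p * s ^ 2)) :
    Tendsto (fun k => ∫ x in unitDisk, F (u k x) / (1 - ‖x‖ ^ 2) ^ 2) atTop (𝓝 0) :=
  (mobius_cocompactness_general hreg hsupp (fun k => (hnorm k).le) hvanish hF.measurable hr hp
    hgrowth).2
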